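/- Assume that the continuity equation d/dt w_t + ∇·(b_t w_t) = 0 has both existence and uniqueness in L∞₊([0,T]; L¹(ℝ^d) ∩ L∞(ℝ^d)). Let 𝛎 be a regular nonnegative σ-finite measure on P(ℝ^d) and let X be the unique (E𝛎)-regular Lagrangian flow in ℝ^d relative to b. Then the unique 𝛎-regular Lagrangian flow in P(ℝ^d) relative to b is given, for 𝛎-a.e. μ and all t ∈ [0,T], by 𝛍(t,μ) = ∫_{ℝ^d} δ_{X(t,x)} dμ(x), i.e. 𝛍(t,μ) is the pushforward X(t,·)_♯μ. -/

import Mathlib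

open MeasureTheory Set Filter Metric Function
open scoped ENNReal NNReal Topology

noncomputable section

instance {Ω : Type*} [MeasurableSpace Ω] : MeasurableSpace (ProbabilityMeasure Ω) :=
  Subtype.instMeasurableSpace

variable {E : Type*} [NormedAddCommGroup E] [NormedSpace ℝ E] [MeasureSpace E]

/-- A curve of measures solves the continuity equation `d/dt μ_t + ∇·(b_t μ_t) = 0`
in the sense of distributions on `(0,T) × ℝ^d`. -/
def SolvesContinuityEquation (b : ℝ → E → E) (T : ℝ) (μ : ℝ → Measure E) : Prop :=
  ∀ φ : E → ℝ, ContDiff ℝ (⊤ : ℕ∞) φ → HasCompactSupport φ →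
  ∀ ψ : ℝ → ℝ, ContDiff ℝ (⊤ : ℕ∞) ψ → HasCompactSupport ψ → tsupport ψ ⊆ Ioo 0 T →
  ∫ t in Ioo 0 T,
      (deriv ψ t * ∫ x, φ x ∂(μ t) + ψ t * ∫ x, (fderiv ℝ φ x) (b t x) ∂(μ t)) = 0

/-- Weak-* continuity of a curve of measures on `[0,T]`. -/
def WeaklyContinuous (T : ℝ) (μ : ℝ → Measure E) : Prop :=
  ∀ φ : E → ℝ, Continuous φ → HasCompactSupport φ →
    ContinuousOn (fun t => ∫ x, φ x ∂(μ t)) (Icc 0 T)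

/-- Membership in the class `L∞₊([0,T]; L¹ ∩ L∞)`, phrased for the measures `μ t = w t · L^d`:
uniformly finite mass (`L¹`) and uniformly bounded density (`L∞`, nonnegativity is automatic). -/
def InL1LinftyClass (T : ℝ) (μ : ℝ → Measure E) : Prop :=
  ∃ C : ℝ≥0, ∀ t ∈ Icc 0 T, μ t Set.univ ≤ (C : ℝ≥0∞) ∧ μ t ≤ C • (volume : Measure E)

/-- Uniqueness for the continuity equation in `L∞₊([0,T]; L¹ ∩ L∞)`. -/
def CEUniqueness (b : ℝ → E → E) (T : ℝ) : Prop :=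
  ∀ μ₁ μ₂ : ℝ → Measure E, InL1LinftyClass T μ₁ → InL1LinftyClass T μ₂ →
    WeaklyContinuous T μ₁ → WeaklyContinuous T μ₂ →
    SolvesContinuityEquation b T μ₁ → SolvesContinuityEquation b T μ₂ →
    μ₁ 0 = μ₂ 0 → ∀ t ∈ Icc 0 T, μ₁ t = μ₂ t

/-- Existence for the continuity equation in `L∞₊([0,T]; L¹ ∩ L∞)`. -/
def CEExistence (b : ℝ → E → E) (T : ℝ) : Prop :=
  ∀ ν : Measure E, (∃ C : ℝ≥0, ν Set.univ ≤ (C : ℝ≥0∞) ∧ ν ≤ C • (volume : Measure E)) →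
    ∃ μ : ℝ → Measure E, μ 0 = ν ∧ InL1LinftyClass T μ ∧ WeaklyContinuous T μ ∧
      SolvesContinuityEquation b T μ

/-- `X` is a `ν`-regular Lagrangian flow relative to `b`:
(i) for `ν`-a.e. `x`, `t ↦ X t x` is an absolutely continuous integral solution of the ODE
`Ẋ = b_t(X)` on `[0,T]` with `X 0 x = x`;
(ii) `X(t,·)_♯ ν ≤ C · L^d` for all `t ∈ [0,T]`. -/
def IsRLF (b : ℝ → E → E) (T : ℝ) (ν : Measure E) (X : ℝ → E → E) : Prop :=
  (∀ᵐ x ∂ν,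
      X 0 x = x ∧
      IntegrableOn (fun s => b s (X s x)) (Icc 0 T) ∧
      ∀ t ∈ Icc 0 T, X t x = x + ∫ s in (0:ℝ)..t, b s (X s x)) ∧
  (∀ t ∈ Icc 0 T, AEMeasurable (X t) ν) ∧
  ∃ C : ℝ≥0, ∀ t ∈ Icc 0 T, Measure.map (X t) ν ≤ C • (volume : Measure E)

/-- `b` is Borel and locally integrable on `[0,T] × ℝ^d`. -/
def BorelLocIntegrable (b : ℝ → E → E) (T : ℝ) : Prop :=
  Measurable (Function.uncurry b) ∧
  ∀ R : ℝ, IntegrableOn (Function.uncurry b) (Icc 0 T ×ˢ Metric.closedBall (0 : E) R)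

/-- The expectation `E𝛎 ∈ M₊(ℝ^d)` of a measure `𝛎` on `P(ℝ^d)`:
`∫ φ d(E𝛎) = ∫ (∫ φ dμ) d𝛎(μ)`. -/
def expectation {Ω : Type*} [MeasurableSpace Ω] (ν : Measure (ProbabilityMeasure Ω)) :
    Measure Ω :=
  ν.bind fun μ => (μ : Measure Ω)

/-- A measure `𝛎` on `P(ℝ^d)` is regular if `E𝛎 ≤ C · L^d` for some constant `C`. -/
def IsRegularOnP (ν : Measure (ProbabilityMeasure E)) : Prop :=
  ∃ C : ℝ≥0, expectation ν ≤ C • (volume : Measure E)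

/-- `M` is a `𝛎`-regular Lagrangian flow in `P(ℝ^d)` relative to `b`:
(i) for `𝛎`-a.e. `μ`, `|b| ∈ L¹_loc((0,T) × ℝ^d; μ_t dt)`, `t ↦ M t μ` is weakly continuous,
starts at `μ`, and solves the continuity equation distributionally;
(ii) `E(M(t,·)_♯ 𝛎) ≤ C · L^d` for all `t ∈ [0,T]`. -/
def IsMeasureRLF (b : ℝ → E → E) (T : ℝ) (ν : Measure (ProbabilityMeasure E))
    (M : ℝ → ProbabilityMeasure E → ProbabilityMeasure E) : Prop :=
  (∀ᵐ μ ∂ν,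
      M 0 μ = μ ∧
      (∀ R > (0:ℝ), ∀ a c : ℝ, 0 < a → c < T →
        ∫⁻ t in Icc a c,
          ∫⁻ x in Metric.closedBall (0 : E) R, ‖b t x‖₊ ∂(M t μ : Measure E) ≠ ⊤) ∧
      (∀ φ : E → ℝ, Continuous φ → HasCompactSupport φ →
        ContinuousOn (fun t => ∫ x, φ x ∂(M t μ : Measure E)) (Icc 0 T)) ∧
      SolvesContinuityEquation b T (fun t => (M t μ : Measure E))) ∧
  (∀ t ∈ Icc 0 T, AEMeasurable (M t) ν) ∧
  ∃ C : ℝ≥0, ∀ t ∈ Icc 0 T,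
    expectation (Measure.map (M t) ν) ≤ C • (volume : Measure E)

/-
If two regular families of solutions have the same initial data, then so do their averages over
any set of parameters of finite measure. These averages are solutions in `L¹ ∩ L∞`, where
uniqueness holds, so they agree at all times, and hence so do almost all curves of the families.
This applies to a `𝛎`-RLF and to the averages `∫ δ_{X(t,x)} dμ(x)` of the Dirac solutions carried
by the flow `X`, which are regular with respect to `𝛎` because `X` is regular with respect to `E𝛎`.
-/

open ProbabilityTheory

section Measurability

variable {α ι β Ω : Type*} [MeasurableSpace α] [TopologicalSpace ι]

lemma measurable_of_dense_of_continuous [FrechetUrysohnSpace ι] [TopologicalSpace β]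
    [TopologicalSpace.PseudoMetrizableSpace β] [MeasurableSpace β] [BorelSpace β] {S : Set ι}
    (hS : Dense S) {u : ι → α → β} (hu : ∀ a, Continuous fun i => u i a)
    (hm : ∀ i ∈ S, Measurable (u i)) (i : ι) : Measurable (u i) := by
  obtain ⟨s, hs, hlim⟩ := mem_closure_iff_seq_limit.1 (hS i)
  exact measurable_of_tendsto_metrizable (fun n => hm _ (hs n))
    (tendsto_pi_nhds.2 fun a => ((hu a).tendsto i).comp hlim)

variable [PseudoMetricSpace Ω] [ProperSpace Ω] [MeasurableSpace Ω] [BorelSpace Ω]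
  {m : α → Measure Ω}

lemma measurable_measure_of_isCompact [∀ a, IsFiniteMeasure (m a)]
    (h : ∀ φ : Ω → ℝ, Continuous φ → HasCompactSupport φ → Measurable fun a => ∫ x, φ x ∂m a)
    {K : Set Ω} (hK : IsCompact K) (hKc : IsClosed K) : Measurable fun a => m a K := by
  have hpos : ∀ n : ℕ, (0 : ℝ) < 1 / ((n : ℝ) + 1) := fun n => by positivity
  have hlim : ∀ a, Tendsto (fun n : ℕ => ∫ x, (thickenedIndicator (hpos n) K x : ℝ) ∂m a) atTop
      (𝓝 ((m a).real K)) := fun a =>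
    tendsto_integral_thickenedIndicator_of_isClosed (m a) hKc hpos
      tendsto_one_div_add_atTop_nhds_zero_nat
  have hreal : Measurable fun a => (m a).real K := by
    refine measurable_of_tendsto_metrizable (fun n => h _ ?_ ?_) (tendsto_pi_nhds.2 hlim)
    · exact NNReal.continuous_coe.comp (thickenedIndicator (hpos n) K).continuous
    · refine HasCompactSupport.intro (hK.cthickening (r := 1 / ((n : ℝ) + 1))) fun x hx => ?_
      simpa using thickenedIndicator_zero (hpos n) K
        (notMem_subset (thickening_subset_cthickening _ _) hx)
  have hofReal : (fun a => m a K) = fun a => ENNReal.ofReal ((m a).real K) :=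
    funext fun _ => (ofReal_measureReal).symm
  exact hofReal ▸ hreal.ennreal_ofReal

lemma measurable_measure_of_integral [∀ a, IsProbabilityMeasure (m a)]
    (h : ∀ φ : Ω → ℝ, Continuous φ → HasCompactSupport φ → Measurable fun a => ∫ x, φ x ∂m a) :
    Measurable m := by
  refine Measurable.measure_of_isPiSystem_of_isProbabilityMeasure
    (BorelSpace.measurable_eq.trans borel_eq_generateFrom_isClosed) isPiSystem_isClosed
    fun s (hs : IsClosed s) => ?_
  have hlim : ∀ a, Tendsto (fun n => m a (s ∩ closure (compactCovering Ω n))) atTop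
      (𝓝 (m a s)) := by
    intro a
    have hs_eq : s = ⋃ n, s ∩ closure (compactCovering Ω n) := by
      rw [← inter_iUnion, iUnion_eq_univ_iff.2 fun x => ?_, inter_univ]
      obtain ⟨n, hn⟩ := exists_mem_compactCovering x
      exact ⟨n, subset_closure hn⟩
    conv => enter [3, 1]; rw [hs_eq]
    exact tendsto_measure_iUnion_atTop fun i j hij =>
      inter_subset_inter_right _ (closure_mono (compactCovering_subset Ω hij))
  refine measurable_of_tendsto_metrizable (fun n => ?_) (tendsto_pi_nhds.2 hlim)
  exact measurable_measure_of_isCompact h ((isCompact_compactCovering Ω n).closure.inter_left hs)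
    (hs.inter isClosed_closure)

variable {N : ι → α → ProbabilityMeasure Ω}

lemma measurable_uncurry_of_continuous_integral [TopologicalSpace.MetrizableSpace ι]
    [SecondCountableTopology ι] [MeasurableSpace ι] [OpensMeasurableSpace ι] {S : Set ι}
    (hS : Dense S) (hN : ∀ i ∈ S, Measurable (N i))
    (hcont : ∀ a, ∀ φ : Ω → ℝ, Continuous φ → HasCompactSupport φ →
      Continuous fun i => ∫ x, φ x ∂(N i a : Measure Ω)) :
    Measurable (uncurry N) := by
  suffices Measurable fun p : ι × α => (N p.1 p.2 : Measure Ω) from this.subtype_mk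
  refine measurable_measure_of_integral fun φ hφ hφc => ?_
  refine measurable_uncurry_of_continuous_of_measurable
    (u := fun i a => ∫ x, φ x ∂(N i a : Measure Ω)) (hcont · φ hφ hφc) ?_
  refine measurable_of_dense_of_continuous hS (hcont · φ hφ hφc) fun i hi => ?_
  exact ((hφ.stronglyMeasurable_of_hasCompactSupport hφc).integral_kernel
    (κ := ⟨_, measurable_subtype_coe.comp (hN i hi)⟩)).measurable

end Measurability

section WeaklyContinuous

variable {α F : Type*} [MeasurableSpace α] [NormedAddCommGroup F] [MeasureSpace F]
  {T : ℝ}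

lemma WeaklyContinuous.congr {μ μ' : ℝ → Measure F} (h : WeaklyContinuous T μ)
    (hμ : ∀ t ∈ Icc 0 T, μ' t = μ t) : WeaklyContinuous T μ' := fun φ hφ hφc =>
  (h φ hφ hφc).congr fun t ht => by simp only [hμ t ht]

variable [ProperSpace F] [BorelSpace F]

lemma WeaklyContinuous.eqOn_of_dense {μ μ' : ℝ → Measure F} [∀ t, IsFiniteMeasure (μ t)]
    [∀ t, IsFiniteMeasure (μ' t)] (h : WeaklyContinuous T μ) (h' : WeaklyContinuous T μ')
    {D : Set (Icc 0 T)} (hD : Dense D) (hμ : ∀ t ∈ D, μ t = μ' t) : EqOn μ μ' (Icc 0 T) := by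
  intro t ht
  refine Measure.ext_of_integral_eq_on_compactlySupported fun φ => ?_
  have hD_eq : EqOn (fun s : Icc 0 T => ∫ x, φ x ∂μ s) (fun s => ∫ x, φ x ∂μ' s) D :=
    fun s hs => by simp only [hμ s hs]
  exact congrFun (Continuous.ext_on hD (h φ φ.continuous φ.hasCompactSupport).domRestrict
    (h' φ φ.continuous φ.hasCompactSupport).domRestrict hD_eq) ⟨t, ht⟩

lemma exists_kernel_eq_of_weaklyContinuous (hT : 0 ≤ T) {ρ : Measure α}
    {N : ℝ → α → ProbabilityMeasure F} (hm : ∀ t ∈ Icc 0 T, AEMeasurable (N t) ρ)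
    (hc : ∀ᵐ a ∂ρ, WeaklyContinuous T fun t => (N t a : Measure F)) :
    ∃ κ : Kernel (α × ℝ) F, IsMarkovKernel κ ∧
      ∀ᵐ a ∂ρ, ∀ t ∈ Icc 0 T, κ (a, t) = (N t a : Measure F) := by
  classical
  obtain ⟨D, hD_count, hD⟩ := TopologicalSpace.exists_countable_dense (Icc 0 T)
  have hmk : ∀ᵐ a ∂ρ, ∀ t : Icc 0 T, t ∈ D → N t a = (hm t t.2).mk _ a :=
    (ae_ball_iff hD_count).2 fun t _ => (hm t t.2).ae_eq_mk
  obtain ⟨G, hG_ae, hG_meas, hG⟩ := (hc.and hmk).exists_measurable_mem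
  let δ₀ : ProbabilityMeasure F := ⟨Measure.dirac 0, inferInstance⟩
  let N' : Icc 0 T → α → ProbabilityMeasure F := fun t => G.piecewise (N t) fun _ => δ₀
  have hN'_meas : ∀ t ∈ D, Measurable (N' t) := fun t ht => by
    have : N' t = G.piecewise ((hm t t.2).mk _) fun _ => δ₀ :=
      funext fun a => by by_cases ha : a ∈ G <;> simp [N', ha, (hG a _).2 t ht]
    exact this ▸ (hm t t.2).measurable_mk.piecewise hG_meas measurable_const
  have hN'_cont : ∀ a, ∀ φ : F → ℝ, Continuous φ → HasCompactSupport φ →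
      Continuous fun t => ∫ x, φ x ∂(N' t a : Measure F) := by
    intro a φ hφ hφc
    by_cases ha : a ∈ G
    · simpa only [N', piecewise_eq_of_mem _ _ _ ha, comp_def] using
        ((hG a ha).1 φ hφ hφc).comp_continuous continuous_subtype_val Subtype.prop
    · simpa only [N', piecewise_eq_of_notMem _ _ _ ha] using continuous_const
  have hN'_uncurry : Measurable (uncurry N') :=
    measurable_uncurry_of_continuous_integral hD hN'_meas hN'_cont
  have hproj : Measurable (projIcc 0 T hT) := continuous_projIcc.measurable
  have hκ : Measurable fun p : α × ℝ => (N' (projIcc 0 T hT p.2) p.1 : Measure F) :=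
    measurable_subtype_coe.comp <| hN'_uncurry.comp <|
      (hproj.comp measurable_snd).prodMk measurable_fst
  refine ⟨⟨_, hκ⟩, ⟨fun p => (N' (projIcc 0 T hT p.2) p.1).2⟩, ?_⟩
  filter_upwards [hG_ae] with a ha t ht
  simp [N', ha, projIcc_of_mem hT ht]

end WeaklyContinuous

section Kernels

variable {α Ω : Type*} [MeasurableSpace α] [MeasurableSpace Ω]

lemma kernel_ae_eq_of_forall_comp_restrict_eq [MeasurableSpace.CountableOrCountablyGenerated α Ω]
    {κ η : Kernel α Ω} [IsFiniteKernel κ] [IsFiniteKernel η] {ρ : Measure α} [SigmaFinite ρ]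
    (h : ∀ A, MeasurableSet A → ρ A < ∞ → κ ∘ₘ ρ.restrict A = η ∘ₘ ρ.restrict A) :
    κ =ᵐ[ρ] η := by
  refine ae_of_forall_measure_lt_top_ae_restrict _ fun A hA hρA => ?_
  have : IsFiniteMeasure (ρ.restrict A) := ⟨by simpa using hρA⟩
  refine Kernel.ae_eq_of_compProd_eq (Measure.ext_prod fun {s t} hs ht => ?_)
  have hsA : κ ∘ₘ ρ.restrict (s ∩ A) = η ∘ₘ ρ.restrict (s ∩ A) :=
    h _ (hs.inter hA) ((measure_mono inter_subset_right).trans_lt hρA)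
  rw [Measure.compProd_apply_prod hs ht, Measure.compProd_apply_prod hs ht,
    Measure.restrict_restrict hs, ← Measure.bind_apply ht (Kernel.aemeasurable _), hsA,
    Measure.bind_apply ht (Kernel.aemeasurable _)]

lemma bind_dirac_eq_map_of_aemeasurable {μ : Measure α} {f : α → Ω} (hf : AEMeasurable f μ) :
    (μ.bind fun x => Measure.dirac (f x)) = μ.map f := by
  rw [Measure.bind_congr_right (hf.ae_eq_mk.mono fun x hx => congrArg Measure.dirac hx),
    Measure.bind_dirac_eq_map _ hf.measurable_mk, Measure.map_congr hf.ae_eq_mk]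

lemma comp_eq_map_of_ae_eq_dirac [NormedAddCommGroup Ω] [NormedSpace ℝ Ω] [CompleteSpace Ω]
    [SecondCountableTopology Ω] [BorelSpace Ω] {η : Kernel α Ω} {μ : Measure α} {f : α → Ω}
    (h : ∀ᵐ x ∂μ, η x = Measure.dirac (f x)) :
    η ∘ₘ μ = μ.map f := by
  -- The mean of `δ_{f(x)}` is `f(x)`, which makes `f` almost everywhere measurable.
  have hf_mean : f =ᵐ[μ] fun x => ∫ y, y ∂η x := by
    filter_upwards [h] with x hx
    simp [hx]
  have hf : AEMeasurable f μ := ⟨_, stronglyMeasurable_id.integral_kernel.measurable, hf_mean⟩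
  exact (Measure.bind_congr_right h).trans (bind_dirac_eq_map_of_aemeasurable hf)

/-- The Markov kernel from `P(Ω)` to `Ω` that sends a probability measure to itself. -/
def evalKernel (Ω : Type*) [MeasurableSpace Ω] : Kernel (ProbabilityMeasure Ω) Ω :=
  ⟨(↑), measurable_subtype_coe⟩

instance : IsMarkovKernel (evalKernel Ω) := ⟨fun μ => μ.2⟩

lemma expectation_eq_comp (ν : Measure (ProbabilityMeasure Ω)) :
    expectation ν = evalKernel Ω ∘ₘ ν := rfl

lemma expectation_map {ν : Measure α} {N : α → ProbabilityMeasure Ω} (hN : AEMeasurable N ν) :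
    expectation (ν.map N) = ν.bind fun a => (N a : Measure Ω) := by
  have hcoe : Measurable fun μ : ProbabilityMeasure Ω => (μ : Measure Ω) := measurable_subtype_coe
  unfold expectation Measure.bind
  rw [AEMeasurable.map_map_of_aemeasurable hcoe.aemeasurable hN]
  rfl

end Kernels

section AverageKernel

variable {α β Ω : Type*} [MeasurableSpace α] [MeasurableSpace β] [MeasurableSpace Ω]

/-- The average `b ↦ ∫ κ(a, b) dρ(a)` of a kernel over its first parameter. With `b` a time, this
is the average of the curves of measures `κ(a, ·)` with respect to `ρ`. -/
def averageKernel (κ : Kernel (α × β) Ω) (ρ : Measure α) : Kernel β Ω :=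
  κ ∘ₖ (Kernel.const β ρ ×ₖ Kernel.id)

instance (κ : Kernel (α × β) Ω) [IsFiniteKernel κ] (ρ : Measure α) [IsFiniteMeasure ρ] :
    IsFiniteKernel (averageKernel κ ρ) := by
  unfold averageKernel; infer_instance

instance (κ : Kernel (α × β) Ω) [IsSFiniteKernel κ] (ρ : Measure α) :
    IsSFiniteKernel (averageKernel κ ρ) := by
  unfold averageKernel; infer_instance

lemma averageKernel_apply (κ : Kernel (α × β) Ω) (ρ : Measure α) [SFinite ρ] (b : β) :
    averageKernel κ ρ b = κ.sectL b ∘ₘ ρ := by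
  rw [averageKernel, Kernel.comp_apply, Kernel.prod_apply, Kernel.const_apply, Kernel.id_apply,
    Measure.prod_dirac, Measure.bind, Measure.map_map κ.measurable (by fun_prop)]
  rfl

lemma averageKernel_apply_univ (κ : Kernel (α × β) Ω) [IsMarkovKernel κ] (ρ : Measure α)
    [SFinite ρ] (b : β) : averageKernel κ ρ b univ = ρ univ := by
  rw [averageKernel_apply, Measure.comp_apply_univ]

lemma averageKernel_mono (κ : Kernel (α × β) Ω) {ρ ρ' : Measure α} [SFinite ρ] [SFinite ρ']
    (h : ρ ≤ ρ') (b : β) : averageKernel κ ρ b ≤ averageKernel κ ρ' b := by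
  refine Measure.le_iff.2 fun s hs => ?_
  simp only [averageKernel_apply, Measure.bind_apply hs (Kernel.aemeasurable _)]
  exact lintegral_mono' h le_rfl

lemma compProd_averageKernel (m : Measure β) [SFinite m] (κ : Kernel (α × β) Ω)
    [IsSFiniteKernel κ] (ρ : Measure α) [SFinite ρ] :
    m ⊗ₘ averageKernel κ ρ = (Kernel.const α m ⊗ₖ κ) ∘ₘ ρ := by
  ext s hs
  have hκ : Measurable fun p : α × β => κ p (Prod.mk p.2 ⁻¹' s) :=
    Kernel.measurable_kernel_prodMk_left (κ := κ) (t := {q | (q.1.2, q.2) ∈ s})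
      (hs.preimage (by fun_prop))
  calc (m ⊗ₘ averageKernel κ ρ) s = ∫⁻ b, ∫⁻ a, κ (a, b) (Prod.mk b ⁻¹' s) ∂ρ ∂m := by
        simp_rw [Measure.compProd_apply hs, averageKernel_apply,
          Measure.bind_apply (hs.preimage measurable_prodMk_left) (Kernel.aemeasurable _),
          Kernel.sectL_apply]
    _ = ∫⁻ a, ∫⁻ b, κ (a, b) (Prod.mk b ⁻¹' s) ∂m ∂ρ :=
        (lintegral_lintegral_swap hκ.aemeasurable).symm
    _ = ((Kernel.const α m ⊗ₖ κ) ∘ₘ ρ) s := by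
        simp_rw [Measure.bind_apply hs (Kernel.aemeasurable _), Kernel.compProd_apply hs,
          Kernel.const_apply]

end AverageKernel

section CompProd

variable {α β Ω G : Type*} [MeasurableSpace α] [MeasurableSpace β] [MeasurableSpace Ω]

lemma integral_measure_comp [NormedAddCommGroup G] [NormedSpace ℝ G] {κ : Kernel α Ω}
    {ρ : Measure α} {f : Ω → G} (hf : Integrable f (κ ∘ₘ ρ)) :
    ∫ x, f x ∂(κ ∘ₘ ρ) = ∫ a, ∫ x, f x ∂κ a ∂ρ := by
  rw [Measure.comp_eq_comp_const_apply] at hf ⊢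
  simpa using Kernel.integral_comp hf

lemma absolutelyContinuous_fst_compProd (m : Measure β) (w : Kernel β Ω) :
    (m ⊗ₘ w).fst ≪ m := by
  refine Measure.AbsolutelyContinuous.mk fun s hs hms => ?_
  rw [Measure.fst_apply hs]
  exact compl_mem_ae_iff.1
    (Measure.ae_compProd_of_ae_fst w (p := (· ∈ sᶜ)) hs.compl (compl_mem_ae_iff.2 hms))

lemma integrable_fst_compProd {m : Measure β} [SFinite m] {f : β → ℝ} (hf : Integrable f m)
    (w : Kernel β Ω) [IsFiniteKernel w] : Integrable (fun p => f p.1) (m ⊗ₘ w) := by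
  have hmeas : AEStronglyMeasurable (fun p => f p.1) (m ⊗ₘ w) :=
    hf.1.comp_quasiMeasurePreserving ⟨measurable_fst, absolutelyContinuous_fst_compProd m w⟩
  refine (Measure.integrable_compProd_iff hmeas).2
    ⟨.of_forall fun b => integrable_const (f b), ?_⟩
  simp only [integral_const, smul_eq_mul]
  refine hf.norm.bdd_mul (c := w.bound.toReal)
    (w.measurable_coe .univ).ennreal_toReal.aestronglyMeasurable (.of_forall fun b => ?_)
  simpa [Measure.real] using ENNReal.toReal_mono w.bound_ne_top (w.measure_le_bound b univ)

end CompProd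

section CurvesOfMeasures

variable {α F : Type*} [MeasurableSpace α] [NormedAddCommGroup F] [MeasureSpace F]

/-- Local integrability of `b` along a curve of measures `w`, i.e. `|b| ∈ L¹_loc(w_t dt)`, tested
on the cylinders `[0,T] × closedBall 0 R`. -/
def LocallyIntegrableAlong (b : ℝ → F → F) (T : ℝ) (w : Kernel ℝ F) : Prop :=
  ∀ R : ℝ, IntegrableOn (uncurry b) (Icc 0 T ×ˢ closedBall (0 : F) R) (volume ⊗ₘ w)

lemma BorelLocIntegrable.locallyIntegrableAlong [OpensMeasurableSpace F]
    [SFinite (volume : Measure F)] {b : ℝ → F → F} {T : ℝ} (hb : BorelLocIntegrable b T)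
    {w : Kernel ℝ F} [IsSFiniteKernel w] {C : ℝ≥0}
    (hw : ∀ t ∈ Icc 0 T, w t ≤ C • (volume : Measure F)) : LocallyIntegrableAlong b T w := by
  intro R
  set S := Icc 0 T ×ˢ closedBall (0 : F) R
  have hS : MeasurableSet S := measurableSet_Icc.prod measurableSet_closedBall
  have hle : (volume ⊗ₘ w).restrict S ≤ C • (volume : Measure (ℝ × F)).restrict S := by
    refine Measure.le_iff.2 fun s hs => ?_
    rw [Measure.restrict_apply hs, Measure.smul_apply, Measure.restrict_apply hs,
      Measure.compProd_apply (hs.inter hS), Measure.volume_eq_prod,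
      Measure.prod_apply (hs.inter hS), ENNReal.smul_def, smul_eq_mul,
      ← lintegral_const_mul' _ _ ENNReal.coe_ne_top]
    refine lintegral_mono fun t => ?_
    by_cases ht : t ∈ Icc 0 T
    · exact hw t ht _
    · have : Prod.mk t ⁻¹' (s ∩ S) = ∅ := by ext x; simp [S, ht]
      simp [this]
  exact ((hb.2 R).smul_measure_nnreal).mono_measure hle

variable [OpensMeasurableSpace F] {b : ℝ → F → F} {T : ℝ} {w : Kernel ℝ F}
  {κ : Kernel (α × ℝ) F} {ρ : Measure α}

lemma LocallyIntegrableAlong.setLIntegral_ne_top [IsSFiniteKernel w]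
    (hb : Measurable (uncurry b)) (hw : LocallyIntegrableAlong b T w) (R : ℝ) :
    ∫⁻ t in Icc 0 T, ∫⁻ x in closedBall 0 R, ‖b t x‖ₑ ∂w t ≠ ∞ := by
  have h := (hw R).2
  rw [HasFiniteIntegral, Measure.setLIntegral_compProd hb.enorm measurableSet_Icc
    measurableSet_closedBall] at h
  exact h.ne

lemma LocallyIntegrableAlong.ae_of_averageKernel [IsSFiniteKernel κ] [SFinite ρ]
    (h : LocallyIntegrableAlong b T (averageKernel κ ρ)) :
    ∀ᵐ a ∂ρ, LocallyIntegrableAlong b T (κ.sectR a) := by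
  have hball : ∀ n : ℕ, ∀ᵐ a ∂ρ,
      IntegrableOn (uncurry b) (Icc 0 T ×ˢ closedBall (0 : F) n) (volume ⊗ₘ κ.sectR a) := by
    intro n
    have hS : MeasurableSet (Icc 0 T ×ˢ closedBall (0 : F) n) :=
      measurableSet_Icc.prod measurableSet_closedBall
    have hn := h n
    rw [compProd_averageKernel, ← integrable_indicator_iff hS] at hn
    filter_upwards [Measure.ae_integrable_of_integrable_comp hn] with a ha
    rwa [Kernel.compProd_apply_eq_compProd_sectR, Kernel.const_apply,
      integrable_indicator_iff hS] at ha
  filter_upwards [ae_all_iff.2 hball] with a ha R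
  obtain ⟨n, hn⟩ := exists_nat_ge R
  exact (ha n).mono_set (prod_mono_right (closedBall_subset_closedBall hn))

lemma integrable_mul_compProd [IsFiniteKernel w] {f : ℝ → ℝ} {φ : F → ℝ} (hf : Integrable f)
    (hφ : Continuous φ) (hφc : HasCompactSupport φ) :
    Integrable (fun p : ℝ × F => f p.1 * φ p.2) (volume ⊗ₘ w) := by
  obtain ⟨L, hL⟩ := hφc.exists_bound_of_continuous hφ
  exact (integrable_fst_compProd hf w).mul_bdd
    ((hφ.stronglyMeasurable_of_hasCompactSupport hφc).comp_measurable
      measurable_snd).aestronglyMeasurable (.of_forall fun p => hL p.2)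

lemma WeaklyContinuous.averageKernel [IsMarkovKernel κ] [IsFiniteMeasure ρ]
    (hκ : ∀ᵐ a ∂ρ, WeaklyContinuous T (κ.sectR a)) :
    WeaklyContinuous T (averageKernel κ ρ) := by
  intro φ hφ hφc
  obtain ⟨L, hL⟩ := hφc.exists_bound_of_continuous hφ
  have hφm : StronglyMeasurable φ := hφ.stronglyMeasurable_of_hasCompactSupport hφc
  have hint : ∀ μ : Measure F, IsFiniteMeasure μ → Integrable φ μ := fun μ _ =>
    .of_bound hφm.aestronglyMeasurable L (.of_forall hL)
  have havg : ∀ t, ∫ x, φ x ∂_root_.averageKernel κ ρ t = ∫ a, ∫ x, φ x ∂κ.sectL t a ∂ρ := by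
    intro t
    rw [averageKernel_apply, integral_measure_comp (hint _ inferInstance)]
  simp_rw [havg]
  refine continuousOn_of_dominated (bound := fun _ => L) (fun t _ => ?_) (fun t _ => ?_)
    (integrable_const L) ?_
  · exact hφm.integral_kernel.aestronglyMeasurable
  · exact .of_forall fun a => by
      simpa using norm_integral_le_of_norm_le_const (μ := κ.sectL t a) (.of_forall hL)
  · filter_upwards [hκ] with a ha using ha φ hφ hφc

end CurvesOfMeasures

section ContinuityEquation

variable {α F : Type*} [MeasurableSpace α] [NormedAddCommGroup F] [NormedSpace ℝ F]
  [MeasureSpace F] {b : ℝ → F → F} {T : ℝ} {μ μ' : ℝ → Measure F}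

/-- The integrand `ψ'(t) φ(x) + ψ(t) ∇φ(x)·b_t(x)` of the weak form of the continuity equation,
as a function on space-time. -/
def weakIntegrand (b : ℝ → F → F) (ψ : ℝ → ℝ) (φ : F → ℝ) (p : ℝ × F) : ℝ :=
  deriv ψ p.1 * φ p.2 + ψ p.1 * fderiv ℝ φ p.2 (b p.1 p.2)

lemma SolvesContinuityEquation.congr (h : SolvesContinuityEquation b T μ)
    (hμ : ∀ t ∈ Icc 0 T, μ' t = μ t) : SolvesContinuityEquation b T μ' := by
  intro φ hφ hφc ψ hψ hψc hψT
  refine (setIntegral_congr_fun measurableSet_Ioo fun t ht => ?_).trans (h φ hφ hφc ψ hψ hψc hψT)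
  simp only [hμ t (Ioo_subset_Icc_self ht)]

variable [OpensMeasurableSpace F] {w : Kernel ℝ F} {κ : Kernel (α × ℝ) F} {ρ : Measure α}
  {ψ : ℝ → ℝ} {φ : F → ℝ}

lemma LocallyIntegrableAlong.integrable_mul_fderiv (hw : LocallyIntegrableAlong b T w)
    (hψ : Continuous ψ) (hψc : HasCompactSupport ψ) (hψT : tsupport ψ ⊆ Icc 0 T)
    (hφ : ContDiff ℝ 1 φ) (hφc : HasCompactSupport φ) :
    Integrable (fun p : ℝ × F => ψ p.1 * fderiv ℝ φ p.2 (b p.1 p.2)) (volume ⊗ₘ w) := by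
  have hdφ : Continuous (fderiv ℝ φ) := hφ.continuous_fderiv one_ne_zero
  obtain ⟨L, hL⟩ := (hφc.fderiv ℝ).exists_bound_of_continuous hdφ
  obtain ⟨P, hP⟩ := hψc.exists_bound_of_continuous hψ
  obtain ⟨R, hR⟩ := (hφc.fderiv ℝ).isCompact.isBounded.subset_closedBall (0 : F)
  set S := Icc 0 T ×ˢ closedBall (0 : F) R
  have hS : MeasurableSet S := measurableSet_Icc.prod measurableSet_closedBall
  have hbS : Integrable (S.indicator (uncurry b)) (volume ⊗ₘ w) :=
    (integrable_indicator_iff hS).2 (hw R)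
  have hcut : (fun p : ℝ × F => ψ p.1 * fderiv ℝ φ p.2 (b p.1 p.2)) =
      fun p => ψ p.1 * fderiv ℝ φ p.2 (S.indicator (uncurry b) p) := by
    ext p
    by_cases hp : p ∈ S
    · simp [hp, uncurry]
    · rcases not_and_or.1 hp with ht | hx
      · simp [image_eq_zero_of_notMem_tsupport (notMem_subset hψT ht)]
      · simp [image_eq_zero_of_notMem_tsupport (notMem_subset hR hx)]
  have hdφ_meas : AEStronglyMeasurable (fun p : ℝ × F => fderiv ℝ φ p.2) (volume ⊗ₘ w) :=
    ((hdφ.stronglyMeasurable_of_hasCompactSupport (hφc.fderiv ℝ)).comp_measurable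
      measurable_snd).aestronglyMeasurable
  have hint : Integrable (fun p => fderiv ℝ φ p.2 (S.indicator (uncurry b) p)) (volume ⊗ₘ w) :=
    (hbS.norm.const_mul L).mono'
      (isBoundedBilinearMap_apply.continuous.comp_aestronglyMeasurable (hdφ_meas.prodMk hbS.1))
      (.of_forall fun p => (fderiv ℝ φ p.2).le_of_opNorm_le (hL p.2) _)
  rw [hcut]
  exact hint.bdd_mul (hψ.measurable.comp measurable_fst).aestronglyMeasurable
    (.of_forall fun p => hP p.1)

lemma LocallyIntegrableAlong.integrable_weakIntegrand [IsFiniteKernel w]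
    (hw : LocallyIntegrableAlong b T w) (hψ : ContDiff ℝ 1 ψ) (hψc : HasCompactSupport ψ)
    (hψT : tsupport ψ ⊆ Icc 0 T) (hφ : ContDiff ℝ 1 φ) (hφc : HasCompactSupport φ) :
    Integrable (weakIntegrand b ψ φ) (volume ⊗ₘ w) :=
  (integrable_mul_compProd ((hψ.continuous_deriv le_rfl).integrable_of_hasCompactSupport
    hψc.deriv) hφ.continuous hφc).add
    (hw.integrable_mul_fderiv hψ.continuous hψc hψT hφ hφc)

lemma LocallyIntegrableAlong.integral_weakIntegrand [IsFiniteKernel w]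
    (hw : LocallyIntegrableAlong b T w) (hψ : ContDiff ℝ 1 ψ) (hψc : HasCompactSupport ψ)
    (hψT : tsupport ψ ⊆ Ioo 0 T) (hφ : ContDiff ℝ 1 φ) (hφc : HasCompactSupport φ) :
    ∫ p, weakIntegrand b ψ φ p ∂(volume ⊗ₘ w) =
      ∫ t in Ioo 0 T, (deriv ψ t * ∫ x, φ x ∂w t + ψ t * ∫ x, fderiv ℝ φ x (b t x) ∂w t) := by
  have hφ_int := integrable_mul_compProd (w := w)
    ((hψ.continuous_deriv le_rfl).integrable_of_hasCompactSupport hψc.deriv) hφ.continuous hφc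
  have hdφ_int := hw.integrable_mul_fderiv hψ.continuous hψc (hψT.trans Ioo_subset_Icc_self)
    hφ hφc
  have hsupp : ∀ t ∉ Ioo 0 T,
      deriv ψ t * ∫ x, φ x ∂w t + ψ t * ∫ x, fderiv ℝ φ x (b t x) ∂w t = 0 := by
    intro t ht
    rw [image_eq_zero_of_notMem_tsupport (notMem_subset hψT ht),
      image_eq_zero_of_notMem_tsupport
        (notMem_subset ((tsupport_deriv_subset).trans hψT) ht), zero_mul, zero_mul, add_zero]
  rw [setIntegral_eq_integral_of_forall_compl_eq_zero hsupp]
  refine (Measure.integral_compProd (hφ_int.add hdφ_int)).trans (integral_congr_ae ?_)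
  filter_upwards [((Measure.integrable_compProd_iff hφ_int.1).1 hφ_int).1,
    ((Measure.integrable_compProd_iff hdφ_int.1).1 hdφ_int).1] with t ht ht'
  simp only [Pi.add_apply, integral_add ht ht', integral_const_mul]

lemma LocallyIntegrableAlong.solvesContinuityEquation_iff [IsFiniteKernel w]
    (hw : LocallyIntegrableAlong b T w) :
    SolvesContinuityEquation b T w ↔
      ∀ φ : F → ℝ, ContDiff ℝ (⊤ : ℕ∞) φ → HasCompactSupport φ →
      ∀ ψ : ℝ → ℝ, ContDiff ℝ (⊤ : ℕ∞) ψ → HasCompactSupport ψ → tsupport ψ ⊆ Ioo 0 T →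
      ∫ p, weakIntegrand b ψ φ p ∂(volume ⊗ₘ w) = 0 := by
  have h1 : (1 : WithTop ℕ∞) ≤ (⊤ : ℕ∞) := by exact_mod_cast le_top
  refine forall₃_congr fun φ hφ hφc => forall₄_congr fun ψ hψ hψc hψT => ?_
  rw [hw.integral_weakIntegrand (hψ.of_le h1) hψc hψT (hφ.of_le h1) hφc]

lemma SolvesContinuityEquation.averageKernel [IsMarkovKernel κ] [IsFiniteMeasure ρ]
    (hκ : ∀ᵐ a ∂ρ, SolvesContinuityEquation b T (κ.sectR a))
    (h : LocallyIntegrableAlong b T (averageKernel κ ρ)) :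
    SolvesContinuityEquation b T (averageKernel κ ρ) := by
  refine h.solvesContinuityEquation_iff.2 fun φ hφ hφc ψ hψ hψc hψT => ?_
  have h1 : (1 : WithTop ℕ∞) ≤ (⊤ : ℕ∞) := by exact_mod_cast le_top
  have hint := h.integrable_weakIntegrand (hψ.of_le h1) hψc (hψT.trans Ioo_subset_Icc_self)
    (hφ.of_le h1) hφc
  rw [compProd_averageKernel] at hint ⊢
  rw [integral_measure_comp hint]
  refine integral_eq_zero_of_ae ?_
  filter_upwards [hκ, h.ae_of_averageKernel] with a ha ha'
  rw [Kernel.compProd_apply_eq_compProd_sectR, Kernel.const_apply]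
  exact ha'.solvesContinuityEquation_iff.1 ha φ hφ hφc ψ hψ hψc hψT

end ContinuityEquation

section AbsolutelyContinuous

variable {X Y : Type*} [PseudoMetricSpace X] [PseudoMetricSpace Y] {a b c : ℝ}

lemma absolutelyContinuousOnInterval_of_dist_le {f : ℝ → X} {g : ℝ → Y} {K : ℝ}
    (hg : AbsolutelyContinuousOnInterval g a b)
    (h : ∀ s ∈ uIcc a b, ∀ t ∈ uIcc a b, dist (f s) (f t) ≤ K * dist (g s) (g t)) :
    AbsolutelyContinuousOnInterval f a b := by
  unfold AbsolutelyContinuousOnInterval at hg ⊢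
  have hKg := hg.const_mul K
  rw [mul_zero] at hKg
  refine squeeze_zero' (.of_forall fun I => Finset.sum_nonneg fun _ _ => dist_nonneg) ?_ hKg
  filter_upwards [mem_inf_of_right (mem_principal_self _)] with I hI
  rw [Finset.mul_sum]
  exact Finset.sum_le_sum fun i hi => h _ (hI.1 i hi).1 _ (hI.1 i hi).2

lemma absolutelyContinuousOnInterval_primitive {F : Type*} [NormedAddCommGroup F]
    [NormedSpace ℝ F] {g : ℝ → F} (hg : IntervalIntegrable g volume a b) (hc : c ∈ uIcc a b) :
    AbsolutelyContinuousOnInterval (fun t => ∫ s in c..t, g s) a b := by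
  refine absolutelyContinuousOnInterval_of_dist_le (K := 1)
    (hg.norm.absolutelyContinuousOnInterval_intervalIntegral hc) fun s hs t ht => ?_
  have hcs : IntervalIntegrable g volume c s := hg.mono_set (uIcc_subset_uIcc hc hs)
  have hct : IntervalIntegrable g volume c t := hg.mono_set (uIcc_subset_uIcc hc ht)
  rw [dist_eq_norm, Real.dist_eq, one_mul, intervalIntegral.integral_interval_sub_left hcs hct,
    intervalIntegral.integral_interval_sub_left hcs.norm hct.norm]
  exact intervalIntegral.norm_integral_le_abs_integral_norm

end AbsolutelyContinuous

section CaratheodorySolution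

variable {F : Type*} [NormedAddCommGroup F] [NormedSpace ℝ F] {b : ℝ → F → F} {T : ℝ}
  {Y : ℝ → F}

/-- Absolutely continuous solutions of the ODE `Y'(t) = b_t(Y(t))` on `[0,T]`, encoded by the
integral equation. -/
structure IsCaratheodorySolution (b : ℝ → F → F) (T : ℝ) (Y : ℝ → F) : Prop where
  integrableOn : IntegrableOn (fun s => b s (Y s)) (Icc 0 T)
  eq_add_integral : ∀ t ∈ Icc 0 T, Y t = Y 0 + ∫ s in (0 : ℝ)..t, b s (Y s)

namespace IsCaratheodorySolution

lemma intervalIntegrable (hY : IsCaratheodorySolution b T Y) (hT : 0 ≤ T) :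
    IntervalIntegrable (fun s => b s (Y s)) volume 0 T :=
  (intervalIntegrable_iff_integrableOn_Icc_of_le hT).2 hY.integrableOn

lemma absolutelyContinuousOnInterval (hY : IsCaratheodorySolution b T Y) (hT : 0 ≤ T) :
    AbsolutelyContinuousOnInterval Y 0 T := by
  refine absolutelyContinuousOnInterval_of_dist_le (K := 1)
    (absolutelyContinuousOnInterval_primitive (hY.intervalIntegrable hT) left_mem_uIcc)
    fun s hs t ht => ?_
  rw [uIcc_of_le hT] at hs ht
  rw [hY.eq_add_integral s hs, hY.eq_add_integral t ht, dist_add_left, one_mul]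

lemma continuousOn (hY : IsCaratheodorySolution b T Y) (hT : 0 ≤ T) :
    ContinuousOn Y (Icc 0 T) :=
  uIcc_of_le hT ▸ (hY.absolutelyContinuousOnInterval hT).continuousOn

lemma ae_hasDerivAt [CompleteSpace F] (hY : IsCaratheodorySolution b T Y) (hT : 0 ≤ T) :
    ∀ᵐ t ∂volume.restrict (Ioo 0 T), HasDerivAt Y (b t (Y t)) t := by
  filter_upwards [ae_restrict_of_ae (hY.intervalIntegrable hT).ae_hasDerivAt_integral,
    ae_restrict_mem measurableSet_Ioo] with t ht htT
  rw [uIcc_of_le hT] at ht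
  have hYt : Y =ᶠ[𝓝 t] fun u => Y 0 + ∫ s in (0 : ℝ)..u, b s (Y s) := by
    filter_upwards [Ioo_mem_nhds htT.1 htT.2] with u hu
    exact hY.eq_add_integral u (Ioo_subset_Icc_self hu)
  exact ((ht (Ioo_subset_Icc_self htT) 0 (left_mem_Icc.2 hT)).const_add _).congr_of_eventuallyEq hYt

lemma integral_weakForm_eq_zero [CompleteSpace F] (hY : IsCaratheodorySolution b T Y)
    (hT : 0 ≤ T) {φ : F → ℝ} (hφ : ContDiff ℝ 1 φ) (hφc : HasCompactSupport φ) {ψ : ℝ → ℝ}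
    (hψ : ContDiff ℝ 1 ψ) (hψT : tsupport ψ ⊆ Ioo 0 T) :
    ∫ t in Ioo 0 T, (deriv ψ t * φ (Y t) + ψ t * fderiv ℝ φ (Y t) (b t (Y t))) = 0 := by
  obtain ⟨L, hL⟩ := hφ.lipschitzWith_of_hasCompactSupport hφc one_ne_zero
  have hφY : AbsolutelyContinuousOnInterval (fun t => φ (Y t)) 0 T :=
    absolutelyContinuousOnInterval_of_dist_le (hY.absolutelyContinuousOnInterval hT)
      fun s _ t _ => hL.dist_le_mul _ _
  have hψ0 : ψ 0 = 0 := image_eq_zero_of_notMem_tsupport fun h => (hψT h).1.false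
  have hψT' : ψ T = 0 := image_eq_zero_of_notMem_tsupport fun h => (hψT h).2.false
  have hparts := hψ.contDiffOn.absolutelyContinuousOnInterval.integral_deriv_mul_eq_sub hφY
  rw [hψ0, hψT', zero_mul, zero_mul, sub_zero, intervalIntegral.integral_of_le hT,
    integral_Ioc_eq_integral_Ioo] at hparts
  refine (integral_congr_ae ?_).trans hparts
  filter_upwards [hY.ae_hasDerivAt hT] with t ht
  have hφYt : HasDerivAt (fun s => φ (Y s)) (fderiv ℝ φ (Y t) (b t (Y t))) t :=
    (hφ.differentiable one_ne_zero _).hasFDerivAt.comp_hasDerivAt t ht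
  rw [hφYt.deriv]

end IsCaratheodorySolution

end CaratheodorySolution

section DiracCurve

variable {F : Type*} [NormedAddCommGroup F] [NormedSpace ℝ F] [MeasureSpace F]
  [MeasurableSingletonClass F] {b : ℝ → F → F} {T : ℝ} {Y : ℝ → F}

lemma IsCaratheodorySolution.weaklyContinuous_dirac (hY : IsCaratheodorySolution b T Y)
    (hT : 0 ≤ T) : WeaklyContinuous T fun t => Measure.dirac (Y t) := fun φ hφ _ => by
  simpa only [integral_dirac, comp_def] using hφ.comp_continuousOn (hY.continuousOn hT)

lemma IsCaratheodorySolution.solvesContinuityEquation_dirac [CompleteSpace F]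
    (hY : IsCaratheodorySolution b T Y) (hT : 0 ≤ T) :
    SolvesContinuityEquation b T fun t => Measure.dirac (Y t) := fun φ hφ hφc ψ hψ _ hψT => by
  have h1 : (1 : WithTop ℕ∞) ≤ (⊤ : ℕ∞) := by exact_mod_cast le_top
  simpa only [integral_dirac] using
    hY.integral_weakForm_eq_zero hT (hφ.of_le h1) hφc (hψ.of_le h1) hψT

end DiracCurve

section RegularSolutionKernel

variable {α F : Type*} [MeasurableSpace α] [NormedAddCommGroup F] [NormedSpace ℝ F]
  [MeasureSpace F] {b : ℝ → F → F} {T : ℝ} {ρ : Measure α} {κ : Kernel (α × ℝ) F}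

/-- A measurable family `a ↦ κ(a, ·)` of curves of measures, `ρ`-almost all of which are weakly
continuous solutions of the continuity equation, and whose average over `ρ` has bounded density.
Regular Lagrangian flows in `ℝ^d` (as families of Dirac curves) and in `P(ℝ^d)` both have this
form. -/
structure IsRegularSolutionKernel (b : ℝ → F → F) (T : ℝ) (ρ : Measure α)
    (κ : Kernel (α × ℝ) F) : Prop where
  weaklyContinuous : ∀ᵐ a ∂ρ, WeaklyContinuous T (κ.sectR a)
  solvesContinuityEquation : ∀ᵐ a ∂ρ, SolvesContinuityEquation b T (κ.sectR a)
  regular : ∃ C : ℝ≥0, ∀ t ∈ Icc 0 T, averageKernel κ ρ t ≤ C • (volume : Measure F)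

namespace IsRegularSolutionKernel

lemma mono {ρ' : Measure α} [SFinite ρ] [SFinite ρ'] (h : IsRegularSolutionKernel b T ρ κ)
    (hρ : ρ' ≤ ρ) : IsRegularSolutionKernel b T ρ' κ where
  weaklyContinuous := ae_mono hρ h.weaklyContinuous
  solvesContinuityEquation := ae_mono hρ h.solvesContinuityEquation
  regular := h.regular.imp fun _ hC t ht => (averageKernel_mono κ hρ t).trans (hC t ht)

lemma inL1LinftyClass [IsMarkovKernel κ] [IsFiniteMeasure ρ]
    (h : IsRegularSolutionKernel b T ρ κ) : InL1LinftyClass T (averageKernel κ ρ) := by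
  obtain ⟨C, hC⟩ := h.regular
  refine ⟨max C (ρ univ).toNNReal, fun t ht => ⟨?_, (hC t ht).trans ?_⟩⟩
  · rw [averageKernel_apply_univ, ENNReal.coe_max, ENNReal.coe_toNNReal (measure_ne_top ρ univ)]
    exact le_max_right _ _
  · gcongr
    exact le_max_left _ _

variable [OpensMeasurableSpace F] [SFinite (volume : Measure F)]

lemma locallyIntegrableAlong_averageKernel (h : IsRegularSolutionKernel b T ρ κ)
    (hb : BorelLocIntegrable b T) [IsSFiniteKernel κ] :
    LocallyIntegrableAlong b T (averageKernel κ ρ) :=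
  h.regular.elim fun _ => hb.locallyIntegrableAlong

lemma ae_locallyIntegrableAlong (h : IsRegularSolutionKernel b T ρ κ)
    (hb : BorelLocIntegrable b T) [IsSFiniteKernel κ] [SFinite ρ] :
    ∀ᵐ a ∂ρ, LocallyIntegrableAlong b T (κ.sectR a) :=
  (h.locallyIntegrableAlong_averageKernel hb).ae_of_averageKernel

variable {κ₁ κ₂ : Kernel (α × ℝ) F} [IsMarkovKernel κ₁] [IsMarkovKernel κ₂]

lemma averageKernel_eq [IsFiniteMeasure ρ] (hb : BorelLocIntegrable b T)
    (huniq : CEUniqueness b T) (h₁ : IsRegularSolutionKernel b T ρ κ₁)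
    (h₂ : IsRegularSolutionKernel b T ρ κ₂) (h0 : ∀ᵐ a ∂ρ, κ₁ (a, 0) = κ₂ (a, 0)) {t : ℝ}
    (ht : t ∈ Icc 0 T) : averageKernel κ₁ ρ t = averageKernel κ₂ ρ t := by
  refine huniq _ _ h₁.inL1LinftyClass h₂.inL1LinftyClass
    (.averageKernel h₁.weaklyContinuous) (.averageKernel h₂.weaklyContinuous)
    (.averageKernel h₁.solvesContinuityEquation (h₁.locallyIntegrableAlong_averageKernel hb))
    (.averageKernel h₂.solvesContinuityEquation (h₂.locallyIntegrableAlong_averageKernel hb))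
    ?_ t ht
  rw [averageKernel_apply, averageKernel_apply]
  exact Measure.bind_congr_right h0

theorem ae_eq [ProperSpace F] [BorelSpace F] [SigmaFinite ρ] (hb : BorelLocIntegrable b T)
    (huniq : CEUniqueness b T) (h₁ : IsRegularSolutionKernel b T ρ κ₁)
    (h₂ : IsRegularSolutionKernel b T ρ κ₂) (h0 : ∀ᵐ a ∂ρ, κ₁ (a, 0) = κ₂ (a, 0)) :
    ∀ᵐ a ∂ρ, ∀ t ∈ Icc 0 T, κ₁ (a, t) = κ₂ (a, t) := by
  have hslice : ∀ t ∈ Icc 0 T, κ₁.sectL t =ᵐ[ρ] κ₂.sectL t := by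
    refine fun t ht => kernel_ae_eq_of_forall_comp_restrict_eq fun A _ hρA => ?_
    have : IsFiniteMeasure (ρ.restrict A) := ⟨by simpa using hρA⟩
    rw [← averageKernel_apply, ← averageKernel_apply]
    exact (h₁.mono Measure.restrict_le_self).averageKernel_eq hb huniq
      (h₂.mono Measure.restrict_le_self) (ae_restrict_of_ae h0) ht
  obtain ⟨D, hD_count, hD⟩ := TopologicalSpace.exists_countable_dense (Icc 0 T)
  have hslice_D : ∀ᵐ a ∂ρ, ∀ t : Icc 0 T, t ∈ D → κ₁.sectR a t = κ₂.sectR a t :=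
    (ae_ball_iff hD_count).2 fun t _ => hslice t t.2
  filter_upwards [h₁.weaklyContinuous, h₂.weaklyContinuous, hslice_D] with a ha₁ ha₂ haD
  exact ha₁.eqOn_of_dense ha₂ hD haD

end IsRegularSolutionKernel

end RegularSolutionKernel

section Superposition

variable {α β Ω F : Type*} [MeasurableSpace α] [MeasurableSpace β] [MeasurableSpace Ω]
  [MeasurableSpace F]

/-- The family obtained from a family `κ` of curves of measures by averaging it over the
measures `η(ω)`, for every value of the parameter `ω`. -/
def superpositionKernel (κ : Kernel (α × β) F) (η : Kernel Ω α) : Kernel (Ω × β) F :=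
  κ ∘ₖ (η ∥ₖ Kernel.id)

instance (κ : Kernel (α × β) F) [IsMarkovKernel κ] (η : Kernel Ω α) [IsMarkovKernel η] :
    IsMarkovKernel (superpositionKernel κ η) := by
  unfold superpositionKernel; infer_instance

lemma superpositionKernel_apply (κ : Kernel (α × β) F) (η : Kernel Ω α) [IsSFiniteKernel η]
    (ω : Ω) (b : β) : superpositionKernel κ η (ω, b) = averageKernel κ (η ω) b := by
  rw [superpositionKernel, averageKernel, Kernel.comp_apply, Kernel.comp_apply,
    Kernel.parallelComp_apply, Kernel.prod_apply, Kernel.const_apply]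

lemma sectR_superpositionKernel (κ : Kernel (α × β) F) (η : Kernel Ω α) [IsSFiniteKernel η]
    (ω : Ω) : (superpositionKernel κ η).sectR ω = averageKernel κ (η ω) :=
  Kernel.ext fun b => superpositionKernel_apply κ η ω b

lemma averageKernel_superpositionKernel (κ : Kernel (α × β) F) (η : Kernel Ω α)
    [IsSFiniteKernel η] (ν : Measure Ω) [SFinite ν] :
    averageKernel (superpositionKernel κ η) ν = averageKernel κ (η ∘ₘ ν) := by
  ext1 b
  have hsectL : (superpositionKernel κ η).sectL b = κ.sectL b ∘ₖ η := Kernel.ext fun ω => by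
    rw [Kernel.sectL_apply, superpositionKernel_apply, averageKernel_apply, Kernel.comp_apply]
  rw [averageKernel_apply, averageKernel_apply, hsectL, Measure.comp_assoc]

lemma superpositionKernel_ae_eq_map {F : Type*} [NormedAddCommGroup F] [NormedSpace ℝ F]
    [CompleteSpace F] [SecondCountableTopology F] [MeasurableSpace F] [BorelSpace F]
    {κ : Kernel (α × β) F} {η : Kernel Ω α} [IsSFiniteKernel η] {ν : Measure Ω} {S : Set β}
    {X : β → α → F} (h : ∀ᵐ x ∂(η ∘ₘ ν), ∀ t ∈ S, κ (x, t) = Measure.dirac (X t x)) :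
    ∀ᵐ ω ∂ν, ∀ t ∈ S, superpositionKernel κ η (ω, t) = (η ω).map (X t) := by
  filter_upwards [Measure.ae_ae_of_ae_comp h] with ω hω t ht
  rw [superpositionKernel_apply, averageKernel_apply]
  exact comp_eq_map_of_ae_eq_dirac (hω.mono fun x hx => hx t ht)

end Superposition

section LagrangianFlows

variable {α Ω F : Type*} [MeasurableSpace α] [MeasurableSpace Ω] [NormedAddCommGroup F]
  [NormedSpace ℝ F] [MeasureSpace F] {b : ℝ → F → F} {T : ℝ} {ρ : Measure α}

lemma exists_isRegularSolutionKernel_of_expectation_le [ProperSpace F] [BorelSpace F]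
    [SFinite ρ] (hT : 0 ≤ T) {N : ℝ → α → ProbabilityMeasure F}
    (hm : ∀ t ∈ Icc 0 T, AEMeasurable (N t) ρ)
    (hcont : ∀ᵐ a ∂ρ, WeaklyContinuous T fun t => (N t a : Measure F))
    (hsol : ∀ᵐ a ∂ρ, SolvesContinuityEquation b T fun t => (N t a : Measure F))
    (hreg : ∃ C : ℝ≥0, ∀ t ∈ Icc 0 T,
      expectation (ρ.map (N t)) ≤ C • (volume : Measure F)) :
    ∃ κ : Kernel (α × ℝ) F, IsMarkovKernel κ ∧ IsRegularSolutionKernel b T ρ κ ∧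
      ∀ᵐ a ∂ρ, ∀ t ∈ Icc 0 T, κ (a, t) = (N t a : Measure F) := by
  obtain ⟨κ, hκ, hκN⟩ := exists_kernel_eq_of_weaklyContinuous hT hm hcont
  refine ⟨κ, hκ, ⟨?_, ?_, ?_⟩, hκN⟩
  · filter_upwards [hcont, hκN] with a ha haN using ha.congr haN
  · filter_upwards [hsol, hκN] with a ha haN using ha.congr haN
  · obtain ⟨C, hC⟩ := hreg
    refine ⟨C, fun t ht => le_of_eq_of_le ?_ (hC t ht)⟩
    rw [averageKernel_apply, expectation_map (hm t ht)]
    exact Measure.bind_congr_right (hκN.mono fun a ha => ha t ht)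

lemma IsMeasureRLF.exists_isRegularSolutionKernel [ProperSpace F] [BorelSpace F] (hT : 0 ≤ T)
    {ν : Measure (ProbabilityMeasure F)} [SFinite ν]
    {M : ℝ → ProbabilityMeasure F → ProbabilityMeasure F} (hM : IsMeasureRLF b T ν M) :
    ∃ κ : Kernel (ProbabilityMeasure F × ℝ) F, IsMarkovKernel κ ∧
      IsRegularSolutionKernel b T ν κ ∧
      ∀ᵐ μ ∂ν, ∀ t ∈ Icc 0 T, κ (μ, t) = (M t μ : Measure F) :=
  exists_isRegularSolutionKernel_of_expectation_le hT hM.2.1 (hM.1.mono fun _ h => h.2.2.1)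
    (hM.1.mono fun _ h => h.2.2.2) hM.2.2

lemma IsRLF.ae_isCaratheodorySolution {ν : Measure F} {X : ℝ → F → F} (hX : IsRLF b T ν X) :
    ∀ᵐ x ∂ν, IsCaratheodorySolution b T fun t => X t x := by
  filter_upwards [hX.1] with x ⟨h0, hint, heq⟩
  exact ⟨hint, by simpa only [h0] using heq⟩

lemma IsRLF.exists_isRegularSolutionKernel [ProperSpace F] [BorelSpace F] (hT : 0 ≤ T)
    {ν : Measure F} [SFinite ν] {X : ℝ → F → F} (hX : IsRLF b T ν X) :
    ∃ κ : Kernel (F × ℝ) F, IsMarkovKernel κ ∧ IsRegularSolutionKernel b T ν κ ∧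
      ∀ᵐ x ∂ν, ∀ t ∈ Icc 0 T, κ (x, t) = Measure.dirac (X t x) := by
  let δ : F → ProbabilityMeasure F := fun x => ⟨Measure.dirac x, inferInstance⟩
  have hδ : Measurable δ := Measure.measurable_dirac.subtype_mk
  have hδX : ∀ t ∈ Icc 0 T, AEMeasurable (fun x => δ (X t x)) ν := fun t ht =>
    hδ.comp_aemeasurable (hX.2.1 t ht)
  refine exists_isRegularSolutionKernel_of_expectation_le hT
    (N := fun t x => δ (X t x)) hδX ?_ ?_ ?_
  · exact hX.ae_isCaratheodorySolution.mono fun x h => h.weaklyContinuous_dirac hT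
  · exact hX.ae_isCaratheodorySolution.mono fun x h => h.solvesContinuityEquation_dirac hT
  · obtain ⟨C, hC⟩ := hX.2.2
    refine ⟨C, fun t ht => le_of_eq_of_le ?_ (hC t ht)⟩
    rw [expectation_map (hδX t ht)]
    exact bind_dirac_eq_map_of_aemeasurable (hX.2.1 t ht)

namespace IsRegularSolutionKernel

variable [OpensMeasurableSpace F] [SFinite (volume : Measure F)]

lemma superpositionKernel {κ : Kernel (α × ℝ) F} [IsMarkovKernel κ] {η : Kernel Ω α}
    [IsMarkovKernel η] {ν : Measure Ω} [SFinite ν] (hb : BorelLocIntegrable b T)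
    (h : IsRegularSolutionKernel b T (η ∘ₘ ν) κ) :
    IsRegularSolutionKernel b T ν (superpositionKernel κ η) := by
  have hregular : ∃ C : ℝ≥0, ∀ t ∈ Icc 0 T,
      averageKernel (_root_.superpositionKernel κ η) ν t ≤ C • (volume : Measure F) := by
    simpa only [averageKernel_superpositionKernel] using h.regular
  have hloc : ∀ᵐ ω ∂ν, LocallyIntegrableAlong b T ((_root_.superpositionKernel κ η).sectR ω) :=
    (hregular.elim fun _ => hb.locallyIntegrableAlong).ae_of_averageKernel
  refine ⟨?_, ?_, hregular⟩
  · filter_upwards [Measure.ae_ae_of_ae_comp h.weaklyContinuous] with ω hω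
    rw [sectR_superpositionKernel]
    exact .averageKernel hω
  · filter_upwards [Measure.ae_ae_of_ae_comp h.solvesContinuityEquation, hloc] with ω hω hω_loc
    rw [sectR_superpositionKernel] at hω_loc ⊢
    exact .averageKernel hω hω_loc

lemma isMeasureRLF {ν : Measure (ProbabilityMeasure F)} [SFinite ν]
    {κ : Kernel (ProbabilityMeasure F × ℝ) F} [IsMarkovKernel κ]
    (h : IsRegularSolutionKernel b T ν κ) (hb : BorelLocIntegrable b T)
    (h0 : ∀ᵐ μ ∂ν, κ (μ, 0) = μ) :
    IsMeasureRLF b T ν fun t μ => ⟨κ (μ, t), inferInstance⟩ := by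
  have hmeas : ∀ t, Measurable fun μ => (⟨κ (μ, t), inferInstance⟩ : ProbabilityMeasure F) :=
    fun t => (κ.sectL t).measurable.subtype_mk
  refine ⟨?_, fun t _ => (hmeas t).aemeasurable, ?_⟩
  · filter_upwards [h0, h.weaklyContinuous, h.solvesContinuityEquation,
      h.ae_locallyIntegrableAlong hb] with μ hμ0 hcont hsol hloc
    refine ⟨Subtype.ext hμ0, fun R _ s t hs ht => ?_, hcont, hsol⟩
    exact ne_top_of_le_ne_top (hloc.setLIntegral_ne_top hb.1 R)
      (lintegral_mono_set (Icc_subset_Icc hs.le ht.le))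
  · obtain ⟨C, hC⟩ := h.regular
    refine ⟨C, fun t ht => le_of_eq_of_le ?_ (hC t ht)⟩
    rw [expectation_map (hmeas t).aemeasurable, averageKernel_apply]
    rfl

end IsRegularSolutionKernel

end LagrangianFlows

theorem representation_of_nu_RLF_on_P_general {F : Type*} [NormedAddCommGroup F]
    [NormedSpace ℝ F] [FiniteDimensional ℝ F] [MeasureSpace F] [BorelSpace F]
    [SFinite (volume : Measure F)] {b : ℝ → F → F} {T : ℝ} (hT : 0 ≤ T)
    (hb : BorelLocIntegrable b T) (huniq : CEUniqueness b T)
    {ν : Measure (ProbabilityMeasure F)} [SigmaFinite ν] {X : ℝ → F → F}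
    (hX : IsRLF b T (expectation ν) X) :
    (∃ M : ℝ → ProbabilityMeasure F → ProbabilityMeasure F, IsMeasureRLF b T ν M) ∧
    ∀ M : ℝ → ProbabilityMeasure F → ProbabilityMeasure F, IsMeasureRLF b T ν M →
      ∀ᵐ μ ∂ν, ∀ t ∈ Icc 0 T, (M t μ : Measure F) = (μ : Measure F).map (X t) := by
  have : ProperSpace F := FiniteDimensional.proper_real F
  rw [expectation_eq_comp] at hX
  obtain ⟨κX, _, hκX, hκX_dirac⟩ := hX.exists_isRegularSolutionKernel hT
  have hκ := hκX.superpositionKernel hb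
  have hκ_map : ∀ᵐ μ : ProbabilityMeasure F ∂ν, ∀ t ∈ Icc 0 T,
      superpositionKernel κX (evalKernel F) (μ, t) = (μ : Measure F).map (X t) :=
    superpositionKernel_ae_eq_map hκX_dirac
  have hκ_zero : ∀ᵐ μ : ProbabilityMeasure F ∂ν,
      superpositionKernel κX (evalKernel F) (μ, 0) = μ := by
    filter_upwards [hκ_map, Measure.ae_ae_of_ae_comp hX.1] with μ hμ hμX
    have hX0 : X 0 =ᵐ[(μ : Measure F)] id := hμX.mono fun x hx => hx.1
    rw [hμ 0 (left_mem_Icc.2 hT), Measure.map_congr hX0, Measure.map_id]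
  refine ⟨⟨_, hκ.isMeasureRLF hb hκ_zero⟩, fun M hM => ?_⟩
  obtain ⟨κM, _, hκM, hκM_eq⟩ := hM.exists_isRegularSolutionKernel hT
  have hinit : ∀ᵐ μ ∂ν, κM (μ, 0) = superpositionKernel κX (evalKernel F) (μ, 0) := by
    filter_upwards [hκM_eq, hM.1, hκ_zero] with μ hμ hM0 hμ_zero
    rw [hμ 0 (left_mem_Icc.2 hT), hM0.1, hμ_zero]
  filter_upwards [hκM_eq, hκ_map, hκM.ae_eq hb huniq hκ hinit] with μ hμM hμ_map heq t ht
  rw [← hμM t ht, heq t ht, hμ_map t ht]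

/-- Representation of the unique `𝛎`-RLF in `P(ℝ^d)`.
If the continuity equation has existence and uniqueness in `L∞₊([0,T]; L¹ ∩ L∞)`,
`𝛎` is a regular measure on `P(ℝ^d)` and `X` is the unique `(E𝛎)`-RLF in `ℝ^d`, then
a `𝛎`-RLF in `P(ℝ^d)` exists and any `𝛎`-RLF `M` is given, for `𝛎`-a.e. `μ` and all
`t ∈ [0,T]`, by `M t μ = ∫ δ_{X(t,x)} dμ(x) = X(t,·)_♯ μ`. -/
theorem representation_of_nu_RLF_on_P {d : ℕ} (T : ℝ) (hT : 0 < T)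
    (b : ℝ → EuclideanSpace ℝ (Fin d) → EuclideanSpace ℝ (Fin d))
    (hb : BorelLocIntegrable b T)
    (hex : CEExistence b T) (huniq : CEUniqueness b T)
    (ν : Measure (ProbabilityMeasure (EuclideanSpace ℝ (Fin d))))
    [SigmaFinite ν] (hreg : IsRegularOnP ν)
    (X : ℝ → EuclideanSpace ℝ (Fin d) → EuclideanSpace ℝ (Fin d))
    (hX : IsRLF b T (expectation ν) X) :
    (∃ M : ℝ → ProbabilityMeasure (EuclideanSpace ℝ (Fin d)) →
        ProbabilityMeasure (EuclideanSpace ℝ (Fin d)), IsMeasureRLF b T ν M) ∧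
    ∀ M : ℝ → ProbabilityMeasure (EuclideanSpace ℝ (Fin d)) →
        ProbabilityMeasure (EuclideanSpace ℝ (Fin d)), IsMeasureRLF b T ν M →
      ∀ᵐ μ ∂ν, ∀ t ∈ Icc 0 T,
        (M t μ : Measure (EuclideanSpace ℝ (Fin d))) =
          Measure.map (X t) (μ : Measure (EuclideanSpace ℝ (Fin d))) :=
  representation_of_nu_RLF_on_P_general hT.le hb huniq hX

end
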